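/- Let d ≥ 2 and λ ∈ [0,1). With U(x) = F(x) − F(x*) and W(x) = F(x) − F(T x) for x ∈ Δ, define g(t) = inf { W(x) : x ∈ Δ, ‖x − x*‖ ≥ t } and α(t) = inf { g(‖y − x*‖) : y ∈ Δ, U(y) ≥ t } for t ≥ 0. Then α : [0,∞) → [0,∞) is non-decreasing, continuous, and positive definite: α(t) = 0 if and only if t = 0. -/

import Mathlib

noncomputable section

open Metric Set Filter

/-- Euclidean space `ℝ^d` with `d = d' + 2 ≥ 2`. -/
abbrev Euc (d : ℕ) := EuclideanSpace ℝ (Fin (d + 2))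

/-- The standard basis vectors. -/
def e (d : ℕ) (j : Fin (d + 2)) : Euc d := EuclideanSpace.single j 1

/-- The Douglas–Rachford operator for the unit sphere and the line
`L_λ = {t e₁ + λ e₂}`, given by its explicit formula
`T x = (x₁/‖x‖) e₁ + ((1 − 1/‖x‖) x₂ + λ) e₂ + (1 − 1/‖x‖) ∑_{j=3}^d x_j e_j`. -/
def DR (d : ℕ) (lam : ℝ) (x : Euc d) : Euc d :=
  (x 0 / ‖x‖) • e d 0 + ((1 - 1 / ‖x‖) * x 1 + lam) • e d 1 +
    ∑ j ∈ Finset.univ.filter (fun j : Fin (d + 2) => 2 ≤ (j : ℕ)),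
      ((1 - 1 / ‖x‖) * x j) • e d j

/-- The intersection point `x* = √(1−λ²) e₁ + λ e₂`. -/
def xStar (d : ℕ) (lam : ℝ) : Euc d := Real.sqrt (1 - lam ^ 2) • e d 0 + lam • e d 1

/-- The Lyapunov-type function of Benoist:
`F(x) = ½‖x − λe₂‖² − λ log(1 + √(1 − x₁²)) + λ√(1 − x₁²) + (λ−1) log x₁`. -/
def F (d : ℕ) (lam : ℝ) (x : Euc d) : ℝ :=
  (1 / 2) * ‖x - lam • e d 1‖ ^ 2 - lam * Real.log (1 + Real.sqrt (1 - (x 0) ^ 2)) +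
    lam * Real.sqrt (1 - (x 0) ^ 2) + (lam - 1) * Real.log (x 0)

/-- `Δ = {x : 0 < x₁ ≤ 1}`. -/
def Delta (d : ℕ) : Set (Euc d) := {x | 0 < x 0 ∧ x 0 ≤ 1}

/-- `W(x) = F(x) − F(T x)`. -/
def W (d : ℕ) (lam : ℝ) (x : Euc d) : ℝ := F d lam x - F d lam (DR d lam x)

/-- `U(x) = F(x) − F(x*)`. -/
def U (d : ℕ) (lam : ℝ) (x : Euc d) : ℝ := F d lam x - F d lam (xStar d lam)

/-- `g(t) = inf { W(x) : x ∈ Δ, ‖x − x*‖ ≥ t }`. -/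
def g (d : ℕ) (lam : ℝ) (t : ℝ) : ℝ :=
  sInf {w : ℝ | ∃ x : Euc d, x ∈ Delta d ∧ t ≤ ‖x - xStar d lam‖ ∧ w = W d lam x}

/-- `α(t) = inf { g(‖y − x*‖) : y ∈ Δ, U(y) ≥ t }`. -/
def alp (d : ℕ) (lam : ℝ) (t : ℝ) : ℝ :=
  sInf {w : ℝ | ∃ y : Euc d, y ∈ Delta d ∧ t ≤ U d lam y ∧ w = g d lam ‖y - xStar d lam‖}

/-!
Write `cosh r = 1 / x₁` and `cosh s = ‖x‖ / x₁`. In these coordinates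
`W x = descent lam s r + lam * (‖x‖ * tanh s - x₂)`, where the second term is nonnegative and
`descent lam s r` is a square plus a Bregman divergence of `log ∘ cosh`, up to a cross term. When
`lam ≤ tanh s` the cross term has the good sign. Otherwise, for fixed `s`, the sign of the
derivative in `r` reduces positivity to `r` with `s ≤ r` and `tanh r ≤ lam`, where the Bregman
divergence dominates, and to `r = 0`, which needs explicit estimates. Hence `W` vanishes only at
`xStar`.

On `Delta` the infimum defining `g` need not be attained, but the logarithmic singularities of
`F x` and `F (DR x)` at `x₁ = 0` cancel, so `W` extends continuously to the closed slab minus the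
origin, where it is still positive and has compact sublevel sets. There `g` is an infimum of a
function with compact sublevel sets over the superlevel sets of a function without local maxima;
such an infimum is attained and depends continuously on the level. The distance from `xStar` to
`{U ≥ t}` is an infimum of the same kind, and `α` is `g` composed with it.
-/

open Real Topology

section MeanValue

variable {f f' : ℝ → ℝ} {a b : ℝ}

lemma exists_sub_eq_mul_sub_of_hasDerivAt (hf : ∀ x, HasDerivAt f (f' x) x) (hab : a ≠ b) :
    ∃ x ∈ uIoo a b, f b - f a = f' x * (b - a) := by
  have slope (u v : ℝ) (huv : u < v) : ∃ x ∈ Ioo u v, f v - f u = f' x * (v - u) := by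
    obtain ⟨x, hx, hslope⟩ := exists_hasDerivAt_eq_slope f f' huv
      (fun y _ => (hf y).continuousAt.continuousWithinAt) (fun y _ => hf y)
    exact ⟨x, hx, by rw [hslope, div_mul_cancel₀ _ (sub_pos.2 huv).ne']⟩
  rcases hab.lt_or_gt with hab | hab
  · rw [uIoo_of_lt hab]
    exact slope a b hab
  · rw [uIoo_of_gt hab]
    obtain ⟨x, hx, hslope⟩ := slope b a hab
    exact ⟨x, hx, by linarith⟩

lemma sub_mul_sub_pos_of_mem_uIoo {x : ℝ} (hx : x ∈ uIoo a b) : 0 < (b - a) * (x - a) := by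
  rcases lt_or_ge a b with hab | hab
  · rw [uIoo_of_lt hab] at hx
    exact mul_pos (sub_pos.2 hab) (sub_pos.2 hx.1)
  · rw [uIoo_of_ge hab] at hx
    exact mul_pos_of_neg_of_neg (by linarith [hx.1, hx.2]) (by linarith [hx.2])

lemma lt_of_hasDerivAt_mul_sub_pos (hf : ∀ x, HasDerivAt f (f' x) x) (hab : a ≠ b)
    (hf' : ∀ x ∈ uIoo a b, 0 < f' x * (x - a)) : f a < f b := by
  obtain ⟨x, hx, hslope⟩ := exists_sub_eq_mul_sub_of_hasDerivAt hf hab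
  have hpos : 0 < (f' x * (b - a)) * (x - a) ^ 2 := by
    linear_combination mul_pos (hf' x hx) (sub_mul_sub_pos_of_mem_uIoo hx)
  linarith [pos_of_mul_pos_left hpos (sq_nonneg _)]

lemma le_of_hasDerivAt_mul_sub_nonneg (hf : ∀ x, HasDerivAt f (f' x) x)
    (hf' : ∀ x ∈ uIoo a b, 0 ≤ f' x * (x - a)) : f a ≤ f b := by
  rcases eq_or_ne a b with rfl | hab
  · rfl
  obtain ⟨x, hx, hslope⟩ := exists_sub_eq_mul_sub_of_hasDerivAt hf hab
  have hside := sub_mul_sub_pos_of_mem_uIoo hx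
  have hnonneg : 0 ≤ (f' x * (b - a)) * (x - a) ^ 2 := by
    linear_combination mul_nonneg (hf' x hx) hside.le
  have hxa : 0 < (x - a) ^ 2 := pow_two_pos_of_ne_zero (right_ne_zero_of_mul hside.ne')
  linarith [nonneg_of_mul_nonneg_left hnonneg hxa]

lemma pos_of_mem_uIoo (ha : 0 ≤ a) (hb : 0 ≤ b) {x : ℝ} (hx : x ∈ uIoo a b) : 0 < x :=
  (le_min ha hb).trans_lt hx.1

lemma ne_of_mem_uIoo {x : ℝ} (hx : x ∈ uIoo a b) : a ≠ x := by
  rintro rfl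
  exact (sub_mul_sub_pos_of_mem_uIoo hx).ne' (by simp)

lemma sub_mul_sub_pos_of_strictMono (hf : StrictMono f) (hab : a ≠ b) :
    0 < (f b - f a) * (b - a) := by
  rcases hab.lt_or_gt with h | h
  · exact mul_pos (sub_pos.2 (hf h)) (sub_pos.2 h)
  · exact mul_pos_of_neg_of_neg (sub_neg.2 (hf h)) (sub_neg.2 h)

end MeanValue

section Tanh

lemma one_sub_tanh_sq (x : ℝ) : 1 - tanh x ^ 2 = 1 / cosh x ^ 2 := by
  have := (cosh_pos x).ne'
  rw [tanh_eq_sinh_div_cosh]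
  field_simp
  linarith [cosh_sq x]

lemma cosh_mul_tanh (x : ℝ) : cosh x * tanh x = sinh x := by
  rw [tanh_eq_sinh_div_cosh, mul_div_cancel₀ _ (cosh_pos x).ne']

lemma hasDerivAt_tanh (x : ℝ) : HasDerivAt tanh (1 - tanh x ^ 2) x := by
  have hcosh := (cosh_pos x).ne'
  have h := (hasDerivAt_sinh x).div (hasDerivAt_cosh x) hcosh
  refine (h.congr_deriv ?_).congr_of_eventuallyEq (.of_forall fun y => tanh_eq_sinh_div_cosh y)
  rw [tanh_eq_sinh_div_cosh]
  field_simp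

lemma tanh_strictMono : StrictMono tanh :=
  strictMono_of_hasDerivAt_pos hasDerivAt_tanh fun x => sub_pos.2 (tanh_sq_lt_one x)

lemma tanh_nonneg {x : ℝ} (hx : 0 ≤ x) : 0 ≤ tanh x :=
  tanh_zero ▸ tanh_strictMono.monotone hx

lemma tanh_pos {x : ℝ} (hx : 0 < x) : 0 < tanh x :=
  tanh_zero ▸ tanh_strictMono hx

lemma hasDerivAt_log_cosh (x : ℝ) : HasDerivAt (fun y => log (cosh y)) (tanh x) x :=
  ((hasDerivAt_cosh x).log (cosh_pos x).ne').congr_deriv (tanh_eq_sinh_div_cosh x).symm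

lemma tanh_eq_one_sub_exp_div (s : ℝ) : tanh s = (1 - exp (-s) ^ 2) / (1 + exp (-s) ^ 2) := by
  rw [tanh_eq, exp_neg]
  have := exp_pos s
  field_simp

lemma tanh_log {s : ℝ} (hs : 0 < s) : tanh (log s) = (s ^ 2 - 1) / (s ^ 2 + 1) := by
  rw [tanh_eq, exp_neg, exp_log hs]
  field_simp

lemma sinh_two_mul_eq_tanh (u : ℝ) : sinh (2 * u) = 2 * tanh u / (1 - tanh u ^ 2) := by
  have := (cosh_pos u).ne'
  rw [sinh_two_mul, one_sub_tanh_sq, ← cosh_mul_tanh u]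
  field_simp

lemma tanh_two_mul_eq_tanh (u : ℝ) : tanh (2 * u) = 2 * tanh u / (1 + tanh u ^ 2) := by
  have := (cosh_pos u).ne'
  rw [tanh_eq_sinh_div_cosh, tanh_eq_sinh_div_cosh, sinh_two_mul, cosh_two_mul]
  field_simp

lemma sub_log_cosh (s : ℝ) : s - log (cosh s) = log 2 - log (1 + exp (-s) ^ 2) := by
  have hcosh : cosh s = exp s * (1 + exp (-s) ^ 2) / 2 := by
    rw [cosh_eq, exp_neg]
    have := exp_pos s
    field_simp
  rw [hcosh, log_div (by positivity) (by norm_num), log_mul (by positivity) (by positivity),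
    log_exp]
  ring

lemma sinh_mul_one_sub_tanh (s : ℝ) : sinh s * (1 - tanh s) = exp (-s) * tanh s := by
  rw [← cosh_sub_sinh, ← cosh_mul_tanh s]
  ring

end Tanh

section RealLog

lemma mem_Icc_of_sub_log_le {a b : ℝ} (ha : 0 < a) (h : a - log a ≤ b) :
    a ∈ Icc (exp (-b)) (2 * b) := by
  have hlog : log a ≤ a / 2 := by
    have := log_le_sub_one_of_pos (half_pos ha)
    rw [log_div ha.ne' two_ne_zero] at this
    linarith [log_two_lt_d9]
  exact ⟨(le_log_iff_exp_le ha).1 (by linarith), by linarith⟩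

lemma log_three_le : log 3 ≤ 17 / 15 := by
  have hsplit : 2 * log 3 = 3 * log 2 + log (9 / 8) := by
    rw [← log_rpow (by norm_num), ← log_rpow (by norm_num), ← log_mul (by norm_num) (by norm_num)]
    norm_num
  have hratio : log (9 / 8) ≤ 9 / 8 - 1 := log_le_sub_one_of_pos (by norm_num)
  linarith [log_two_lt_d9]

end RealLog

section Descent

/-- The Bregman divergence of `log ∘ cosh` at `r` with respect to the base point `s`. -/
def logCoshBregman (s r : ℝ) : ℝ :=
  log (cosh r) - log (cosh s) - tanh s * (r - s)

/-- The coefficient with which the mismatch `lam - tanh s` enters `descent` linearly. -/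
def sinhGap (s r : ℝ) : ℝ :=
  (r - s) - (sinh r - sinh s) / cosh r

/-- The decrease of `F` along one Douglas–Rachford step from a point `x` of the half-plane spanned
by `e₁` and the positive multiples of `e₂`, in the coordinates `cosh r = 1 / x₁` and
`cosh s = ‖x‖ / x₁`. -/
def descent (lam s r : ℝ) : ℝ :=
  (lam - tanh s) ^ 2 / 2 - (lam - tanh s) * sinhGap s r +
    (logCoshBregman s r - (tanh r - tanh s) ^ 2 / 2)

/-- The function whose increments govern the sign of the derivative of `descent lam s`. -/
def slopeProfile (lam r : ℝ) : ℝ :=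
  sinh r * (lam - tanh r)

variable {lam s r : ℝ}

lemma descent_self (lam s : ℝ) : descent lam s s = (lam - tanh s) ^ 2 / 2 := by
  simp [descent, sinhGap, logCoshBregman]

lemma hasDerivAt_logCoshBregman (s r : ℝ) :
    HasDerivAt (logCoshBregman s) (tanh r - tanh s) r := by
  refine (((hasDerivAt_log_cosh r).sub_const (log (cosh s))).sub
    (((hasDerivAt_id r).sub_const s).const_mul (tanh s))).congr_deriv ?_
  ring

lemma hasDerivAt_sinhGap (s r : ℝ) :
    HasDerivAt (sinhGap s) (tanh r * (sinh r - sinh s) / cosh r) r := by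
  have hcosh := (cosh_pos r).ne'
  refine (((hasDerivAt_id r).sub_const s).sub
    (((hasDerivAt_sinh r).sub_const (sinh s)).div (hasDerivAt_cosh r) hcosh)).congr_deriv ?_
  rw [tanh_eq_sinh_div_cosh]
  field_simp
  ring

lemma hasDerivAt_logCoshBregman_sub_sq (s r : ℝ) :
    HasDerivAt (fun r => logCoshBregman s r - (tanh r - tanh s) ^ 2 / 2)
      ((tanh r - tanh s) * tanh r ^ 2) r := by
  refine ((hasDerivAt_logCoshBregman s r).sub
    ((((hasDerivAt_tanh r).sub_const (tanh s)).pow 2).div_const 2)).congr_deriv ?_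
  push_cast
  ring

lemma hasDerivAt_descent (lam s r : ℝ) :
    HasDerivAt (descent lam s)
      (tanh r / cosh r * (slopeProfile lam s - slopeProfile lam r)) r := by
  have hcosh := (cosh_pos r).ne'
  refine ((((hasDerivAt_sinhGap s r).const_mul (lam - tanh s)).const_sub _).add
    (hasDerivAt_logCoshBregman_sub_sq s r)).congr_deriv ?_
  rw [slopeProfile, slopeProfile, ← cosh_mul_tanh r]
  field_simp
  ring

lemma sinhGap_pos (hs : 0 ≤ s) (hr : 0 ≤ r) (hsr : s ≠ r) : 0 < sinhGap s r := by
  have hbase : sinhGap s s = 0 := by simp [sinhGap]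
  rw [← hbase]
  refine lt_of_hasDerivAt_mul_sub_pos (hasDerivAt_sinhGap s) hsr fun x hx => ?_
  have hsinh := sub_mul_sub_pos_of_strictMono sinh_strictMono (ne_of_mem_uIoo hx)
  have := tanh_pos (pos_of_mem_uIoo hs hr hx)
  calc 0 < tanh x / cosh x * ((sinh x - sinh s) * (x - s)) := by positivity
    _ = _ := by ring

lemma logCoshBregman_sub_sq_pos (hs : 0 ≤ s) (hr : 0 ≤ r) (hsr : s ≠ r) :
    0 < logCoshBregman s r - (tanh r - tanh s) ^ 2 / 2 := by
  have hbase : logCoshBregman s s - (tanh s - tanh s) ^ 2 / 2 = 0 := by simp [logCoshBregman]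
  rw [← hbase]
  refine lt_of_hasDerivAt_mul_sub_pos (hasDerivAt_logCoshBregman_sub_sq s) hsr fun x hx => ?_
  have htanh := sub_mul_sub_pos_of_strictMono tanh_strictMono (ne_of_mem_uIoo hx)
  have := tanh_pos (pos_of_mem_uIoo hs hr hx)
  calc 0 < tanh x ^ 2 * ((tanh x - tanh s) * (x - s)) := by positivity
    _ = _ := by ring

lemma descent_pos_of_le_tanh (hs : 0 ≤ s) (hr : 0 ≤ r) (hlam : lam ≤ tanh s)
    (hne : ¬(s = r ∧ tanh s = lam)) : 0 < descent lam s r := by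
  rcases eq_or_ne s r with rfl | hsr
  · have : lam - tanh s ≠ 0 := sub_ne_zero.2 fun h => hne ⟨rfl, h.symm⟩
    rw [descent_self]
    positivity
  · have hcross : 0 ≤ (tanh s - lam) * sinhGap s r :=
      mul_nonneg (sub_nonneg.2 hlam) (sinhGap_pos hs hr hsr).le
    have := logCoshBregman_sub_sq_pos hs hr hsr
    rw [descent]
    linarith [sq_nonneg (lam - tanh s)]

lemma one_sub_tanh_sq_le_cosh_div_cosh (hs : 0 ≤ s) (hsr : s ≤ r) :
    1 - tanh r ^ 2 ≤ cosh s / cosh r * (1 - tanh s ^ 2) := by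
  have hr := cosh_pos r
  have hcosh : cosh s ≤ cosh r := by
    rwa [cosh_le_cosh, abs_of_nonneg hs, abs_of_nonneg (hs.trans hsr)]
  have hs := cosh_pos s
  rw [one_sub_tanh_sq, one_sub_tanh_sq]
  field_simp
  exact hcosh

lemma tanh_mul_sinh_sub_le (hs : 0 ≤ s) (hsr : s ≤ r) :
    (1 - tanh s) * (tanh r * (sinh r - sinh s) / cosh r) ≤ tanh r - tanh s := by
  have hq := tanh_nonneg (hs.trans hsr)
  have hc := tanh_nonneg hs
  have hcq := tanh_strictMono.monotone hsr
  have hratio := one_sub_tanh_sq_le_cosh_div_cosh hs hsr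
  have hexpand : tanh r * (sinh r - sinh s) / cosh r =
      tanh r * (tanh r - tanh s * (cosh s / cosh r)) := by
    have := (cosh_pos r).ne'
    rw [← cosh_mul_tanh r, ← cosh_mul_tanh s]
    field_simp
  set q := tanh r
  set c := tanh s
  have hq1 : q < 1 := tanh_lt_one r
  rw [hexpand]
  refine le_of_mul_le_mul_left ?_ (by positivity : 0 < 1 + c)
  calc (1 + c) * ((1 - c) * (q * (q - c * (cosh s / cosh r))))
      = q * (q * (1 - c ^ 2) - c * (cosh s / cosh r * (1 - c ^ 2))) := by ring
    _ ≤ q * (q * (1 - c ^ 2) - c * (1 - q ^ 2)) := by gcongr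
    _ = (q - c) * (q * (1 + q * c)) := by ring
    _ ≤ (q - c) * (1 * (1 + 1 * c)) := by
      have := sub_nonneg.2 hcq
      gcongr
    _ = (1 + c) * (q - c) := by ring

lemma one_sub_tanh_mul_sinhGap_le (hs : 0 ≤ s) (hsr : s ≤ r) :
    (1 - tanh s) * sinhGap s r ≤ logCoshBregman s r := by
  have hderiv (x : ℝ) := (hasDerivAt_logCoshBregman s x).sub
    ((hasDerivAt_sinhGap s x).const_mul (1 - tanh s))
  have hmono := le_of_hasDerivAt_mul_sub_nonneg (a := s) (b := r) hderiv fun x hx => by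
    rw [uIoo_of_le hsr] at hx
    exact mul_nonneg (sub_nonneg.2 (tanh_mul_sinh_sub_le hs hx.1.le)) (sub_nonneg.2 hx.1.le)
  have hbase : logCoshBregman s s - (1 - tanh s) * sinhGap s s = 0 := by
    simp [logCoshBregman, sinhGap]
  simp only [Pi.sub_apply] at hmono
  linarith

lemma descent_pos_of_tanh_le (hs : 0 ≤ s) (hsr : s ≤ r) (hslam : tanh s < lam)
    (hrlam : tanh r ≤ lam) (hlam : lam < 1) : 0 < descent lam s r := by
  rcases hsr.eq_or_lt with rfl | hlt
  · rw [descent_self]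
    have := sub_pos.2 hslam
    positivity
  · have hgap := sinhGap_pos hs (hs.trans hsr) hlt.ne
    have hcross : (lam - tanh s) * sinhGap s r < (1 - tanh s) * sinhGap s r := by gcongr
    have hsq : (tanh r - tanh s) ^ 2 ≤ (lam - tanh s) ^ 2 :=
      pow_le_pow_left₀ (sub_nonneg.2 (tanh_strictMono.monotone hsr)) (by linarith) 2
    have := one_sub_tanh_mul_sinhGap_le hs hsr
    rw [descent]
    linarith

lemma descent_pos_of_lt_tanh (hs : 0 ≤ s) (hslam : tanh s < lam) (hrlam : lam < tanh r)
    (hlam : lam < 1) : 0 < descent lam s r := by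
  have hc := tanh_nonneg hs
  have hmem : lam ∈ Ioo (-1) 1 := ⟨by linarith, hlam⟩
  have htanh : tanh (artanh lam) = lam := tanh_artanh hmem
  have hsm : s ≤ artanh lam := tanh_strictMono.le_iff_le.1 (htanh.symm ▸ hslam.le)
  have hmr : artanh lam ≤ r := tanh_strictMono.le_iff_le.1 (htanh.symm ▸ hrlam.le)
  refine (descent_pos_of_tanh_le hs hsm hslam htanh.le hlam).trans_le
    (le_of_hasDerivAt_mul_sub_nonneg (hasDerivAt_descent lam s) fun x hx => ?_)
  rw [uIoo_of_le hmr] at hx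
  have hx0 : 0 ≤ x := (hs.trans hsm).trans hx.1.le
  have hslope_s : 0 ≤ slopeProfile lam s :=
    mul_nonneg (sinh_nonneg_iff.2 hs) (sub_nonneg.2 hslam.le)
  have hslope_x : slopeProfile lam x ≤ 0 :=
    mul_nonpos_of_nonneg_of_nonpos (sinh_nonneg_iff.2 hx0)
      (sub_nonpos.2 (htanh.symm.trans_le (tanh_strictMono.monotone hx.1.le)))
  have := tanh_nonneg hx0
  have := sub_nonneg.2 hx.1.le
  have := sub_nonneg.2 (hslope_x.trans hslope_s)
  positivity

lemma hasDerivAt_slopeProfile (lam r : ℝ) :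
    HasDerivAt (slopeProfile lam) (cosh r * (lam - tanh r * (2 - tanh r ^ 2))) r := by
  refine ((hasDerivAt_sinh r).mul ((hasDerivAt_tanh r).const_sub lam)).congr_deriv ?_
  rw [← cosh_mul_tanh r]
  ring

/- `t (2 - t ^ 2)` increases up to `1` as `t` runs over `[0, (√5 - 1) / 2]` and stays above `1` on
the rest of `[0, 1)`, so it crosses the level `lam < 1` only once. -/
lemma mul_two_sub_sq_le_of_le {t u : ℝ} (ht : 0 ≤ t) (htu : t ≤ u) (hu : u ≤ 1)
    (hlam : lam < 1) (h : u * (2 - u ^ 2) ≤ lam) : t * (2 - t ^ 2) ≤ lam := by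
  have hu_lt : u ^ 2 + u < 1 := by nlinarith
  refine le_trans ?_ h
  nlinarith [mul_nonneg (sub_nonneg.2 htu) (by nlinarith : (0:ℝ) ≤ 2 - u ^ 2 - u * t - t ^ 2)]

lemma min_slopeProfile_le (hlam : lam < 1) {a b c : ℝ} (ha : 0 ≤ a) (hab : a ≤ b) (hbc : b ≤ c) :
    min (slopeProfile lam a) (slopeProfile lam c) ≤ slopeProfile lam b := by
  rcases le_or_gt (tanh b * (2 - tanh b ^ 2)) lam with hb | hb
  · refine (min_le_left _ _).trans
      (le_of_hasDerivAt_mul_sub_nonneg (hasDerivAt_slopeProfile lam) fun x hx => ?_)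
    rw [uIoo_of_le hab] at hx
    have hslope := mul_two_sub_sq_le_of_le (tanh_nonneg (ha.trans hx.1.le))
      (tanh_strictMono.monotone hx.2.le) (tanh_lt_one b).le hlam hb
    exact mul_nonneg (mul_nonneg (cosh_pos x).le (sub_nonneg.2 hslope)) (sub_nonneg.2 hx.1.le)
  · refine (min_le_right _ _).trans
      (le_of_hasDerivAt_mul_sub_nonneg (hasDerivAt_slopeProfile lam) fun x hx => ?_)
    rw [uIoo_of_ge hbc] at hx
    have hslope : lam ≤ tanh x * (2 - tanh x ^ 2) := by
      contrapose! hb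
      exact mul_two_sub_sq_le_of_le (tanh_nonneg (ha.trans hab))
        (tanh_strictMono.monotone hx.1.le) (tanh_lt_one x).le hlam hb.le
    exact mul_nonneg_of_nonpos_of_nonpos
      (mul_nonpos_of_nonneg_of_nonpos (cosh_pos x).le (sub_nonpos.2 hslope))
      (sub_nonpos.2 hx.2.le)

lemma min_descent_le (hlam : lam < 1) (hr : 0 ≤ r) (hrs : r ≤ s) :
    min (descent lam s s) (descent lam s 0) ≤ descent lam s r := by
  have hfactor (x : ℝ) (hx : 0 ≤ x) : 0 ≤ tanh x / cosh x :=
    div_nonneg (tanh_nonneg hx) (cosh_pos x).le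
  rcases le_or_gt (slopeProfile lam s) (slopeProfile lam r) with hslope | hslope
  · refine (min_le_left _ _).trans
      (le_of_hasDerivAt_mul_sub_nonneg (hasDerivAt_descent lam s) fun x hx => ?_)
    rw [uIoo_of_ge hrs] at hx
    have hx_slope : slopeProfile lam s ≤ slopeProfile lam x := by
      simpa [hslope] using min_slopeProfile_le hlam hr hx.1.le hx.2.le
    exact mul_nonneg_of_nonpos_of_nonpos
      (mul_nonpos_of_nonneg_of_nonpos (hfactor x (hr.trans hx.1.le)) (sub_nonpos.2 hx_slope))
      (sub_nonpos.2 hx.2.le)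
  · refine (min_le_right _ _).trans
      (le_of_hasDerivAt_mul_sub_nonneg (hasDerivAt_descent lam s) fun x hx => ?_)
    rw [uIoo_of_le hr] at hx
    have hx_slope : slopeProfile lam x ≤ slopeProfile lam s := by
      have := min_slopeProfile_le hlam hx.1.le hx.2.le hrs
      rw [min_le_iff] at this
      exact (this.resolve_right hslope.not_ge).trans hslope.le
    exact mul_nonneg (mul_nonneg (hfactor x hx.1.le) (sub_nonneg.2 hx_slope))
      (sub_nonneg.2 hx.1.le)


lemma sinhGap_zero_right (s : ℝ) : sinhGap s 0 = sinh s - s := by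
  simp [sinhGap, neg_add_eq_sub]

lemma logCoshBregman_zero_right (s : ℝ) : logCoshBregman s 0 = s * tanh s - log (cosh s) := by
  rw [logCoshBregman, cosh_zero, log_one]
  ring

lemma tanh_add_tanh_cube_le (hs : 0 ≤ s) : tanh s + tanh s ^ 3 / 3 ≤ s := by
  have hderiv (x : ℝ) : HasDerivAt (fun y => y - (tanh y + tanh y ^ 3 / 3)) (tanh x ^ 4) x := by
    refine ((hasDerivAt_id x).sub ((hasDerivAt_tanh x).add
      (((hasDerivAt_tanh x).pow 3).div_const 3))).congr_deriv ?_
    push_cast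
    ring
  have hmono := le_of_hasDerivAt_mul_sub_nonneg (a := 0) (b := s) hderiv fun x hx => by
    have := (pos_of_mem_uIoo le_rfl hs hx).le
    simp only [sub_zero]
    positivity
  simpa using hmono

lemma tanh_pow_four_le_logCoshBregman_sub_sq (hs : 0 ≤ s) :
    tanh s ^ 4 / 12 ≤ logCoshBregman s 0 - tanh s ^ 2 / 2 := by
  have hderiv (x : ℝ) : HasDerivAt
      (fun y => y * tanh y - log (cosh y) - tanh y ^ 2 / 2 - tanh y ^ 4 / 12)
      ((1 - tanh x ^ 2) * (x - (tanh x + tanh x ^ 3 / 3))) x := by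
    have htanh := hasDerivAt_tanh x
    refine (((((hasDerivAt_id x).mul htanh).sub (hasDerivAt_log_cosh x)).sub
      ((htanh.pow 2).div_const 2)).sub ((htanh.pow 4).div_const 12)).congr_deriv ?_
    simp only [id]
    push_cast
    ring
  have hmono := le_of_hasDerivAt_mul_sub_nonneg (a := 0) (b := s) hderiv fun x hx => by
    have hx0 := (pos_of_mem_uIoo le_rfl hs hx).le
    exact mul_nonneg (mul_nonneg (sub_nonneg.2 (tanh_sq_lt_one x).le)
      (sub_nonneg.2 (tanh_add_tanh_cube_le hx0))) (by simpa using hx0)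
  have hbase : 0 * tanh 0 - log (cosh 0) - tanh 0 ^ 2 / 2 - tanh 0 ^ 4 / 12 = 0 := by simp
  rw [hbase] at hmono
  rw [logCoshBregman_zero_right]
  linarith

lemma sinh_sub_self_le_of_le_log_three (hs : 0 ≤ s) (hs3 : s ≤ log 3) :
    sinh s - s ≤ 2 / 5 * tanh s ^ 2 := by
  obtain ⟨u, rfl⟩ : ∃ u, s = 2 * u := ⟨s / 2, by ring⟩
  have hu : 0 ≤ u := by linarith
  have ht0 := tanh_nonneg hu
  have ht : tanh u ≤ 1 / 2 := by
    have hu3 : u ≤ log √3 := by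
      rw [log_sqrt (by norm_num)]
      linarith
    calc tanh u ≤ tanh (log √3) := tanh_strictMono.monotone hu3
      _ = 1 / 2 := by
        rw [tanh_log (by positivity), sq_sqrt (by norm_num)]
        norm_num
  have hu_ge := tanh_add_tanh_cube_le hu
  rw [sinh_two_mul_eq_tanh, tanh_two_mul_eq_tanh]
  set t := tanh u
  have ht2 : t ^ 2 ≤ 1 / 4 := by nlinarith
  have hden : 0 < 1 - t ^ 2 := by linarith
  have hcubic : t * (2 + t ^ 2) * (1 + t ^ 2) ^ 2 ≤ 12 / 5 * (1 - t ^ 2) := by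
    calc t * (2 + t ^ 2) * (1 + t ^ 2) ^ 2 ≤ 1 / 2 * (2 + 1 / 4) * (1 + 1 / 4) ^ 2 := by gcongr
      _ ≤ 12 / 5 * (1 - 1 / 4) := by norm_num
      _ ≤ 12 / 5 * (1 - t ^ 2) := by gcongr
  calc 2 * t / (1 - t ^ 2) - 2 * u ≤ 2 * t / (1 - t ^ 2) - 2 * (t + t ^ 3 / 3) := by gcongr
    _ = 2 / 3 * t ^ 2 * (t * (2 + t ^ 2) * (1 + t ^ 2) ^ 2) / ((1 - t ^ 2) * (1 + t ^ 2) ^ 2) := by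
      field_simp
      ring
    _ ≤ 2 / 3 * t ^ 2 * (12 / 5 * (1 - t ^ 2)) / ((1 - t ^ 2) * (1 + t ^ 2) ^ 2) := by gcongr
    _ = 2 / 5 * (2 * t / (1 + t ^ 2)) ^ 2 := by
      field_simp
      ring

lemma descent_zero_right (lam s : ℝ) :
    descent lam s 0 = (lam - tanh s) ^ 2 / 2 - (lam - tanh s) * (sinh s - s) +
      (logCoshBregman s 0 - tanh s ^ 2 / 2) := by
  simp [descent, sinhGap_zero_right]

lemma descent_zero_right_pos_of_le_log_three (hs : 0 ≤ s) (hs3 : s ≤ log 3)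
    (hslam : tanh s < lam) : 0 < descent lam s 0 := by
  have hmismatch := sub_pos.2 hslam
  have hcross : (lam - tanh s) * (sinh s - s) ≤ (lam - tanh s) * (2 / 5 * tanh s ^ 2) := by
    gcongr
    exact sinh_sub_self_le_of_le_log_three hs hs3
  have hquartic := tanh_pow_four_le_logCoshBregman_sub_sq hs
  rcases hs.eq_or_lt with rfl | hs
  · rw [descent_self]
    positivity
  · rw [descent_zero_right]
    have := pow_pos (tanh_pos hs) 4
    nlinarith [sq_nonneg (lam - tanh s - 2 / 5 * tanh s ^ 2)]

lemma one_sub_tanh_le_sinh_sub_self (hs3 : log 3 ≤ s) : 1 - tanh s ≤ sinh s - s := by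
  have htanh : 4 / 5 ≤ tanh s := by
    calc 4 / 5 = tanh (log 3) := by rw [tanh_log (by norm_num)]; norm_num
      _ ≤ tanh s := tanh_strictMono.monotone hs3
  have hsinh : 1 / 5 ≤ sinh s - s := by
    calc 1 / 5 ≤ 4 / 3 - log 3 := by linarith [log_three_le]
      _ = sinh (log 3) - log 3 := by rw [sinh_log (by norm_num)]; norm_num
      _ ≤ sinh s - s := sinh_sub_id_strictMono.monotone hs3
  linarith

lemma descent_one_zero_right (s : ℝ) :
    descent 1 s 0 = 1 / 2 - tanh s + (s - log (cosh s)) - sinh s * (1 - tanh s) := by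
  rw [descent_zero_right, logCoshBregman_zero_right]
  ring

lemma descent_one_zero_right_pos (hs : 0 ≤ s) : 0 < descent 1 s 0 := by
  rw [descent_one_zero_right, sub_log_cosh, sinh_mul_one_sub_tanh, tanh_eq_one_sub_exp_div]
  have hw : 0 < exp (-s) := exp_pos _
  have hw1 : exp (-s) ≤ 1 := exp_le_one_iff.2 (neg_nonpos.2 hs)
  set w := exp (-s)
  have hlog : log (1 + w ^ 2) ≤ w ^ 2 := by
    linarith [log_le_sub_one_of_pos (by positivity : 0 < 1 + w ^ 2)]
  have hpoly : 0 < (1 / 2 + 0.693 - w ^ 2) * (1 + w ^ 2) - (1 + w) * (1 - w ^ 2) := by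
    nlinarith [sq_nonneg (w - 0.35), mul_nonneg hw.le (sq_nonneg (w - 0.35))]
  have hquot : (1 + w) * ((1 - w ^ 2) / (1 + w ^ 2)) < 1 / 2 + 0.693 - w ^ 2 := by
    rw [← mul_div_assoc, div_lt_iff₀ (by positivity)]
    linarith
  linarith [log_two_gt_d9]

/- `descent lam s 0` is a quadratic in `lam` with minimum at `tanh s + (sinh s - s) ≥ 1`. -/
lemma descent_zero_right_pos_of_log_three_le (hs3 : log 3 ≤ s) (hlam : lam ≤ 1) :
    0 < descent lam s 0 := by
  have hs : 0 ≤ s := (log_nonneg (by norm_num)).trans hs3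
  refine (descent_one_zero_right_pos hs).trans_le ?_
  have hvertex := one_sub_tanh_le_sinh_sub_self hs3
  rw [descent_zero_right, descent_zero_right]
  nlinarith

lemma descent_pos (hs : 0 ≤ s) (hr : 0 ≤ r) (hlam : lam < 1) (hne : ¬(s = r ∧ tanh s = lam)) :
    0 < descent lam s r := by
  rcases le_or_gt lam (tanh s) with hslam | hslam
  · exact descent_pos_of_le_tanh hs hr hslam hne
  rcases le_total r s with hrs | hsr
  · refine (lt_min ?_ ?_).trans_le (min_descent_le hlam hr hrs)
    · exact descent_pos_of_tanh_le hs le_rfl hslam hslam.le hlam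
    · exact (le_total s (log 3)).elim
        (fun hs3 => descent_zero_right_pos_of_le_log_three hs hs3 hslam)
        (fun hs3 => descent_zero_right_pos_of_log_three_le hs3 hlam.le)
  · rcases le_or_gt (tanh r) lam with hrlam | hrlam
    · exact descent_pos_of_tanh_le hs hsr hslam hrlam hlam
    · exact descent_pos_of_lt_tanh hs hslam hrlam hlam

end Descent

section NormedSpace

lemma not_isLocalMaxOn_of_lt_add_smul {E : Type*} [NormedAddCommGroup E] [NormedSpace ℝ E]
    {A : Set E} {φ : E → ℝ} {a v : E} (hmem : ∀ᶠ η in 𝓝[>] (0 : ℝ), a + η • v ∈ A)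
    (hlt : ∀ η : ℝ, 0 < η → φ a < φ (a + η • v)) : ¬IsLocalMaxOn φ A a := by
  intro hmax
  have hpath : Tendsto (fun η : ℝ => a + η • v) (𝓝[>] 0) (𝓝[A] a) := by
    refine tendsto_nhdsWithin_iff.2 ⟨?_, hmem⟩
    exact (Continuous.tendsto' (by fun_prop) 0 a (by simp)).mono_left nhdsWithin_le_nhds
  obtain ⟨η, hle, hη⟩ := ((hpath.eventually hmax).and eventually_mem_nhdsWithin).exists
  exact (hlt η hη).not_ge hle

lemma norm_lt_norm_add_smul {E : Type*} [NormedAddCommGroup E] [InnerProductSpace ℝ E] {a v : E}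
    (hav : 0 ≤ inner ℝ a v) (hv : v ≠ 0) {η : ℝ} (hη : 0 < η) : ‖a‖ < ‖a + η • v‖ := by
  refine lt_of_pow_lt_pow_left₀ 2 (norm_nonneg _) ?_
  rw [norm_add_sq_real, real_inner_smul_right, norm_smul]
  have := norm_pos_iff.2 hv
  have : 0 < ‖η‖ := norm_pos_iff.2 hη.ne'
  have : 0 < (‖η‖ * ‖v‖) ^ 2 := by positivity
  have := mul_nonneg hη.le hav
  linarith

end NormedSpace

section SuperlevelInf

variable {X : Type*} {A A' : Set X} {f φ : X → ℝ} {t : ℝ}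

/-- The infimum of `f` over the part of `A` where `φ ≥ t`. Both `g` and `alp` are of this form, as
is the distance from `xStar` to the superlevel sets of `U`. -/
def superlevelInf (A : Set X) (f φ : X → ℝ) (t : ℝ) : ℝ :=
  sInf (f '' {x ∈ A | t ≤ φ x})

lemma superlevelInf_le (hbdd : BddBelow (f '' A)) {x : X} (hx : x ∈ A) (ht : t ≤ φ x) :
    superlevelInf A f φ t ≤ f x :=
  csInf_le (hbdd.mono (image_mono (sep_subset _ _))) ⟨x, ⟨hx, ht⟩, rfl⟩

lemma le_superlevelInf (hne : {x ∈ A | t ≤ φ x}.Nonempty) {b : ℝ}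
    (h : ∀ x ∈ A, t ≤ φ x → b ≤ f x) : b ≤ superlevelInf A f φ t :=
  le_csInf (hne.image f) (forall_mem_image.2 fun x hx => h x hx.1 hx.2)

lemma exists_lt_of_superlevelInf_lt (hne : {x ∈ A | t ≤ φ x}.Nonempty) {b : ℝ}
    (h : superlevelInf A f φ t < b) : ∃ x ∈ A, t ≤ φ x ∧ f x < b := by
  obtain ⟨_, ⟨x, hx, rfl⟩, hlt⟩ := exists_lt_of_csInf_lt (hne.image f) h
  exact ⟨x, hx.1, hx.2, hlt⟩

lemma monotone_superlevelInf (hbdd : BddBelow (f '' A))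
    (hne : ∀ t, {x ∈ A | t ≤ φ x}.Nonempty) : Monotone (superlevelInf A f φ) :=
  fun _ t hst => le_superlevelInf (hne t) fun _ hx ht => superlevelInf_le hbdd hx (hst.trans ht)

lemma superlevelInf_comp {h : ℝ → ℝ} (hmono : Monotone h) (hcont : Continuous h)
    (hbdd : BddBelow (f '' A)) (hne : {x ∈ A | t ≤ φ x}.Nonempty) :
    superlevelInf A (h ∘ f) φ t = h (superlevelInf A f φ t) := by
  rw [superlevelInf, image_comp]
  exact (hmono.map_csInf_of_continuousAt hcont.continuousAt (hne.image f)
    (hbdd.mono (image_mono (sep_subset _ _)))).symm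

variable [TopologicalSpace X]

lemma exists_gt_of_not_isLocalMaxOn {x : X} (hx : ¬IsLocalMaxOn φ A x) {p : X → Prop}
    (hp : ∀ᶠ y in 𝓝[A] x, p y) : ∃ y ∈ A, φ x < φ y ∧ p y := by
  obtain ⟨y, hy, hyA, hpy⟩ :=
    ((not_eventually.1 hx).and_eventually (eventually_mem_nhdsWithin.and hp)).exists
  exact ⟨y, hyA, not_le.1 hy, hpy⟩

lemma eventually_lt_superlevelInf (hne : ∀ t, {x ∈ A | t ≤ φ x}.Nonempty)
    (hbdd : BddBelow (f '' A))
    (hcompact : ∀ b < superlevelInf A f φ t, IsCompact {x ∈ A | f x ≤ b})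
    (hφ : ContinuousOn φ A) {b : ℝ} (hb : b < superlevelInf A f φ t) :
    ∀ᶠ s in 𝓝 t, b < superlevelInf A f φ s := by
  obtain ⟨c, hbc, hct⟩ := exists_between hb
  have hbelow : ∃ m < t, ∀ x ∈ A, f x ≤ c → φ x ≤ m := by
    rcases {x ∈ A | f x ≤ c}.eq_empty_or_nonempty with hempty | hnonempty
    · exact ⟨t - 1, by linarith, fun x hx hfx =>
        absurd ⟨hx, hfx⟩ (eq_empty_iff_forall_notMem.1 hempty x)⟩
    · obtain ⟨x, hx, hmax⟩ :=
        (hcompact c hct).exists_isMaxOn hnonempty (hφ.mono (sep_subset _ _))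
      refine ⟨φ x, ?_, fun y hy hfy => hmax ⟨hy, hfy⟩⟩
      by_contra! ht
      exact (hct.trans_le (superlevelInf_le hbdd hx.1 ht)).not_ge hx.2
  obtain ⟨m, hmt, hm⟩ := hbelow
  filter_upwards [lt_mem_nhds hmt] with s hs
  refine hbc.trans_le (le_superlevelInf (hne s) fun x hx hsx => ?_)
  by_contra! hfx
  exact (hs.trans_le hsx).not_ge (hm x hx hfx.le)

lemma eventually_superlevelInf_lt (hne : {x ∈ A | t ≤ φ x}.Nonempty)
    (hbdd : BddBelow (f '' A)) (hf : ContinuousOn f A) (hmax : ∀ x ∈ A, ¬IsLocalMaxOn φ A x)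
    {b : ℝ} (hb : superlevelInf A f φ t < b) : ∀ᶠ s in 𝓝 t, superlevelInf A f φ s < b := by
  obtain ⟨x, hx, htx, hfx⟩ := exists_lt_of_superlevelInf_lt hne hb
  obtain ⟨y, hy, hxy, hfy⟩ :=
    exists_gt_of_not_isLocalMaxOn (hmax x hx) ((hf x hx).eventually_lt_const hfx)
  filter_upwards [gt_mem_nhds (htx.trans_lt hxy)] with s hs
  exact (superlevelInf_le hbdd hy hs.le).trans_lt hfy

lemma continuous_superlevelInf (hne : ∀ t, {x ∈ A | t ≤ φ x}.Nonempty)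
    (hbdd : BddBelow (f '' A))
    (hcompact : ∀ t, ∀ b < superlevelInf A f φ t, IsCompact {x ∈ A | f x ≤ b})
    (hf : ContinuousOn f A) (hφ : ContinuousOn φ A) (hmax : ∀ x ∈ A, ¬IsLocalMaxOn φ A x) :
    Continuous (superlevelInf A f φ) :=
  continuous_iff_continuousAt.2 fun t => tendsto_order.2
    ⟨fun _ => eventually_lt_superlevelInf hne hbdd (hcompact t) hφ,
      fun _ => eventually_superlevelInf_lt (hne t) hbdd hf hmax⟩

lemma exists_eq_superlevelInf [T2Space X] (hne : {x ∈ A | t ≤ φ x}.Nonempty)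
    (hbdd : BddBelow (f '' A)) (hcompact : ∀ b, IsCompact {x ∈ A | f x ≤ b})
    (hf : ContinuousOn f A) (hφ : ContinuousOn φ A) :
    ∃ x ∈ A, t ≤ φ x ∧ f x = superlevelInf A f φ t := by
  obtain ⟨x₀, hx₀, htx₀⟩ := hne
  set K := {x ∈ A | f x ≤ f x₀}
  have hKA : K ⊆ A := sep_subset _ _
  have hclosed : IsClosed (K ∩ φ ⁻¹' Ici t) :=
    (hφ.mono hKA).preimage_isClosed_of_isClosed (hcompact _).isClosed isClosed_Ici
  have hcomp := (hcompact (f x₀)).of_isClosed_subset hclosed inter_subset_left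
  obtain ⟨x, ⟨hxK, htx⟩, hmin⟩ := hcomp.exists_isMinOn ⟨x₀, ⟨hx₀, le_rfl⟩, htx₀⟩
    (hf.mono (inter_subset_left.trans hKA))
  refine ⟨x, hKA hxK, htx, le_antisymm (le_superlevelInf ⟨x₀, hx₀, htx₀⟩ fun y hy hty => ?_)
    (superlevelInf_le hbdd (hKA hxK) htx)⟩
  rcases le_total (f y) (f x₀) with hyx₀ | hyx₀
  · exact hmin ⟨⟨hy, hyx₀⟩, hty⟩
  · exact hxK.2.trans hyx₀

lemma superlevelInf_eq_of_subset_closure (hsub : A ⊆ A') (hdense : A' ⊆ closure A)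
    (hne : {x ∈ A | t ≤ φ x}.Nonempty) (hbdd : BddBelow (f '' A'))
    (hf : ContinuousOn f A') (hφ : ContinuousOn φ A')
    (hmax : ∀ x ∈ A', ¬IsLocalMaxOn φ A' x) :
    superlevelInf A f φ t = superlevelInf A' f φ t := by
  refine le_antisymm (le_superlevelInf (hne.mono fun x hx => ⟨hsub hx.1, hx.2⟩)
      fun x hx htx => le_of_forall_gt fun b hb => ?_)
    (le_superlevelInf hne fun x hx htx => superlevelInf_le hbdd (hsub hx) htx)
  obtain ⟨y, hy, hxy, hfy⟩ :=
    exists_gt_of_not_isLocalMaxOn (hmax x hx) ((hf x hx).eventually_lt_const hb)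
  have hnear : ∀ᶠ z in 𝓝[A] y, t < φ z ∧ f z < b :=
    nhdsWithin_mono y hsub (((hφ y hy).eventually_const_lt (htx.trans_lt hxy)).and
      ((hf y hy).eventually_lt_const hfy))
  have := mem_closure_iff_nhdsWithin_neBot.1 (hdense hy)
  obtain ⟨z, ⟨htz, hfz⟩, hz⟩ := (hnear.and self_mem_nhdsWithin).exists
  exact (superlevelInf_le (hbdd.mono (image_mono hsub)) hz htz.le).trans_lt hfz

end SuperlevelInf

section Geometry

open scoped RealInnerProductSpace

variable {d : ℕ} {lam : ℝ} {x : Euc d}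

lemma inner_e (x : Euc d) (j : Fin (d + 2)) : ⟪x, e d j⟫ = x j := by
  simp [e, EuclideanSpace.inner_single_right]

lemma norm_e (j : Fin (d + 2)) : ‖e d j‖ = 1 := by
  simp [e]

lemma sq_add_sq_le_norm_sq (x : Euc d) : x 0 ^ 2 + x 1 ^ 2 ≤ ‖x‖ ^ 2 := by
  rw [EuclideanSpace.real_norm_sq_eq, ← Finset.sum_pair (f := fun i => x i ^ 2) zero_ne_one]
  exact Finset.sum_le_univ_sum_of_nonneg fun i => sq_nonneg (x i)

lemma apply_le_norm (x : Euc d) (j : Fin (d + 2)) : x j ≤ ‖x‖ :=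
  (le_abs_self _).trans (PiLp.norm_apply_le x j)

lemma xStar_apply_zero : xStar d lam 0 = √(1 - lam ^ 2) := by
  simp [xStar, e]

lemma xStar_apply_one : xStar d lam 1 = lam := by
  simp [xStar, e]

lemma inner_xStar (x : Euc d) : ⟪x, xStar d lam⟫ = √(1 - lam ^ 2) * x 0 + lam * x 1 := by
  simp only [xStar, inner_add_right, inner_smul_right, inner_e]

lemma norm_xStar (hlam : lam ^ 2 ≤ 1) : ‖xStar d lam‖ = 1 := by
  have hsq : ‖xStar d lam‖ ^ 2 = 1 := by
    rw [← real_inner_self_eq_norm_sq, inner_xStar, xStar_apply_zero, xStar_apply_one,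
      mul_self_sqrt (sub_nonneg.2 hlam)]
    ring
  exact (pow_eq_one_iff_of_nonneg (norm_nonneg _) two_ne_zero).1 hsq

lemma xStar_mem_Delta (hlam : lam ^ 2 < 1) : xStar d lam ∈ Delta d := by
  rw [Delta, mem_ofPred_eq, xStar_apply_zero]
  exact ⟨sqrt_pos.2 (sub_pos.2 hlam), sqrt_le_one.2 (sub_le_self _ (sq_nonneg lam))⟩

lemma norm_sub_smul_e_one_sq (lam : ℝ) (x : Euc d) :
    ‖x - lam • e d 1‖ ^ 2 = ‖x‖ ^ 2 - 2 * lam * x 1 + lam ^ 2 := by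
  rw [norm_sub_sq_real, inner_smul_right, inner_e, norm_smul, norm_e, Real.norm_eq_abs, mul_one,
    sq_abs]
  ring

lemma DR_eq (lam : ℝ) (x : Euc d) :
    DR d lam x =
      (1 - 1 / ‖x‖) • x + ((2 / ‖x‖ - 1) * x 0) • e d 0 + lam • e d 1 := by
  ext j
  simp only [DR, e, PiLp.add_apply, PiLp.smul_apply, WithLp.ofLp_sum, Finset.sum_apply, smul_eq_mul,
    PiLp.single_apply, mul_ite, mul_one, mul_zero, Finset.sum_ite_eq, Finset.mem_filter,
    Finset.mem_univ, true_and]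
  rcases eq_or_ne j 0 with rfl | hj0
  · simp only [↓reduceIte, zero_ne_one, add_zero, Fin.coe_ofNat_eq_mod, Nat.zero_mod,
      nonpos_iff_eq_zero, OfNat.ofNat_ne_zero]
    ring
  rcases eq_or_ne j 1 with rfl | hj1
  · simp [hj0]
  have hj : 2 ≤ (j : ℕ) := by
    have h0 := Fin.val_ne_of_ne hj0
    have h1 := Fin.val_ne_of_ne hj1
    simp only [Fin.val_zero, Fin.val_one] at h0 h1
    omega
  simp [hj0, hj1, hj]

lemma DR_apply_zero (lam : ℝ) (x : Euc d) : DR d lam x 0 = x 0 / ‖x‖ := by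
  have he0 : e d 0 0 = 1 := by simp [e]
  have he1 : e d 1 0 = 0 := by simp [e]
  simp only [DR_eq, PiLp.add_apply, PiLp.smul_apply, smul_eq_mul, he0, he1]
  ring

lemma norm_DR_sub_smul_e_one_sq (hx : x ≠ 0) :
    ‖DR d lam x - lam • e d 1‖ ^ 2 = (‖x‖ - 1) ^ 2 + (2 / ‖x‖ - 1) * x 0 ^ 2 := by
  have hnorm := norm_ne_zero_iff.2 hx
  rw [DR_eq, add_sub_cancel_right, norm_add_sq_real, norm_smul, norm_smul, norm_e,
    real_inner_smul_left, real_inner_smul_right, inner_e, mul_pow, mul_pow, Real.norm_eq_abs,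
    Real.norm_eq_abs, sq_abs, sq_abs]
  field_simp
  ring

/-- The boundary term `√(1 - a²) - log (1 + √(1 - a²))` of `F`. -/
def sqrtSubLog (a : ℝ) : ℝ :=
  √(1 - a ^ 2) - log (1 + √(1 - a ^ 2))

lemma continuous_sqrtSubLog : Continuous sqrtSubLog := by
  have hpos (a : ℝ) : 1 + √(1 - a ^ 2) ≠ 0 := by positivity
  unfold sqrtSubLog
  fun_prop (disch := exact hpos _)

lemma sqrtSubLog_mem_Icc (a : ℝ) : sqrtSubLog a ∈ Icc 0 1 := by
  have hlog := log_le_sub_one_of_pos (by positivity : 0 < 1 + √(1 - a ^ 2))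
  have hlog_nonneg := log_nonneg (by linarith [sqrt_nonneg (1 - a ^ 2)] : 1 ≤ 1 + √(1 - a ^ 2))
  have hsqrt : √(1 - a ^ 2) ≤ 1 := sqrt_le_one.2 (sub_le_self _ (sq_nonneg a))
  constructor <;> rw [sqrtSubLog] <;> linarith

lemma sqrtSubLog_inv_cosh {r : ℝ} (hr : 0 ≤ r) :
    sqrtSubLog (1 / cosh r) = tanh r - r + log (cosh r) := by
  have hsqrt : √(1 - (1 / cosh r) ^ 2) = tanh r := by
    rw [one_div_pow, ← one_sub_tanh_sq, sub_sub_cancel, sqrt_sq (tanh_nonneg hr)]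
  have hexp : 1 + tanh r = exp r / cosh r := by
    have := (cosh_pos r).ne'
    rw [← cosh_add_sinh, ← cosh_mul_tanh r]
    field_simp
  rw [sqrtSubLog, hsqrt, hexp, log_div (exp_pos r).ne' (cosh_pos r).ne', log_exp]
  ring

lemma F_eq (lam : ℝ) (x : Euc d) :
    F d lam x = ‖x - lam • e d 1‖ ^ 2 / 2 + lam * sqrtSubLog (x 0) - (1 - lam) * log (x 0) := by
  rw [F, sqrtSubLog]
  ring

/-- The continuous extension of `W d lam` from `Delta d` to the closed slab without the origin. The
term `log (x 0)`, which is singular on the boundary, cancels in `F x - F (DR x)`. -/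
def WExt (d : ℕ) (lam : ℝ) (x : Euc d) : ℝ :=
  ‖x‖ - 1 / 2 + x 0 ^ 2 / 2 - x 0 ^ 2 / ‖x‖ - lam * x 1 + lam ^ 2 / 2 +
    lam * (sqrtSubLog (x 0) - sqrtSubLog (x 0 / ‖x‖)) - (1 - lam) * log ‖x‖

lemma ne_zero_of_mem_Delta (hx : x ∈ Delta d) : x ≠ 0 := by
  rintro rfl
  exact lt_irrefl _ hx.1

lemma W_eq_WExt (hx : x ∈ Delta d) : W d lam x = WExt d lam x := by
  have hx0 := ne_zero_of_mem_Delta hx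
  have hnorm := norm_ne_zero_iff.2 hx0
  rw [W, F_eq, F_eq, DR_apply_zero, norm_sub_smul_e_one_sq, norm_DR_sub_smul_e_one_sq hx0,
    log_div hx.1.ne' hnorm, WExt]
  field_simp
  ring

lemma WExt_xStar (hlam : lam ^ 2 ≤ 1) : WExt d lam (xStar d lam) = 0 := by
  rw [WExt, norm_xStar hlam, xStar_apply_zero, xStar_apply_one, sq_sqrt (sub_nonneg.2 hlam)]
  rw [div_one, div_one, log_one]
  ring

lemma exists_hyperbolic_coordinates (hx : x ∈ Delta d) :
    ∃ s r : ℝ, 0 ≤ s ∧ 0 ≤ r ∧ x 0 = 1 / cosh r ∧ ‖x‖ = cosh s / cosh r := by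
  have hs : 1 ≤ ‖x‖ / x 0 := (one_le_div hx.1).2 (apply_le_norm x 0)
  have hr : 1 ≤ 1 / x 0 := (one_le_div hx.1).2 hx.2
  refine ⟨arcosh (‖x‖ / x 0), arcosh (1 / x 0), arcosh_nonneg hs, arcosh_nonneg hr, ?_, ?_⟩
  · rw [cosh_arcosh hr, one_div_one_div]
  · have := hx.1.ne'
    rw [cosh_arcosh hs, cosh_arcosh hr]
    field_simp

lemma WExt_eq_descent_add {s r : ℝ} (hs : 0 ≤ s) (hr : 0 ≤ r) (hx0 : x 0 = 1 / cosh r)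
    (hnorm : ‖x‖ = cosh s / cosh r) :
    WExt d lam x = descent lam s r + lam * (‖x‖ * tanh s - x 1) := by
  have hcs := (cosh_pos s).ne'
  have hcr := (cosh_pos r).ne'
  have hratio : x 0 / ‖x‖ = 1 / cosh s := by
    rw [hx0, hnorm]
    field_simp
  have hlog : log ‖x‖ = log (cosh s) - log (cosh r) := by rw [hnorm, log_div hcs hcr]
  have hx0_sq : x 0 ^ 2 = 1 - tanh r ^ 2 := by rw [hx0, one_sub_tanh_sq, one_div_pow]
  have hx0_sq_div : x 0 ^ 2 / ‖x‖ = ‖x‖ * (1 - tanh s ^ 2) := by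
    rw [hx0, hnorm, one_sub_tanh_sq]
    field_simp
  have hsinh : (sinh r - sinh s) / cosh r = tanh r - ‖x‖ * tanh s := by
    rw [← cosh_mul_tanh r, ← cosh_mul_tanh s, hnorm]
    field_simp
  rw [WExt, hratio, hlog, hx0_sq_div, hx0_sq, hx0, sqrtSubLog_inv_cosh hr, sqrtSubLog_inv_cosh hs,
    descent, sinhGap, logCoshBregman, hsinh]
  ring

lemma apply_one_le_norm_mul_tanh {s r : ℝ} (hs : 0 ≤ s) (hx0 : x 0 = 1 / cosh r)
    (hnorm : ‖x‖ = cosh s / cosh r) : x 1 ≤ ‖x‖ * tanh s := by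
  refine le_of_abs_le (abs_le_of_sq_le_sq ?_ (mul_nonneg (norm_nonneg x) (tanh_nonneg hs)))
  have hx0_sq : x 0 ^ 2 = ‖x‖ ^ 2 * (1 - tanh s ^ 2) := by
    have := (cosh_pos s).ne'
    rw [hx0, hnorm, one_sub_tanh_sq]
    field_simp
  linarith [sq_add_sq_le_norm_sq x]

lemma eq_xStar_of_norm_eq_one (hlam : lam ^ 2 ≤ 1) (hnorm : ‖x‖ = 1)
    (hx0 : x 0 = √(1 - lam ^ 2)) (hx1 : lam * x 1 = lam ^ 2) : x = xStar d lam := by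
  rw [← inner_eq_one_iff_of_norm_eq_one (𝕜 := ℝ) hnorm (norm_xStar hlam), inner_xStar, hx0, hx1,
    mul_self_sqrt (sub_nonneg.2 hlam), sub_add_cancel]

lemma WExt_pos_of_mem_Delta (h0 : 0 ≤ lam) (h1 : lam < 1) (hx : x ∈ Delta d)
    (hne : x ≠ xStar d lam) : 0 < WExt d lam x := by
  obtain ⟨s, r, hs, hr, hx0, hnorm⟩ := exists_hyperbolic_coordinates hx
  have hx1 := apply_one_le_norm_mul_tanh hs hx0 hnorm
  rw [WExt_eq_descent_add hs hr hx0 hnorm]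
  by_cases hcrit : s = r ∧ tanh s = lam
  · obtain ⟨rfl, rfl⟩ := hcrit
    have hnorm1 : ‖x‖ = 1 := by rw [hnorm, div_self (cosh_pos s).ne']
    have hx0_eq : x 0 = √(1 - tanh s ^ 2) := by
      rw [one_sub_tanh_sq, ← one_div_pow, sqrt_sq (one_div_pos.2 (cosh_pos s)).le, hx0]
    rw [descent_self, sub_self, hnorm1, one_mul]
    rw [hnorm1, one_mul] at hx1
    refine lt_of_le_of_ne (by nlinarith) fun hzero => hne ?_
    exact eq_xStar_of_norm_eq_one (tanh_sq_lt_one s).le hnorm1 hx0_eq (by linarith)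
  · exact add_pos_of_pos_of_nonneg (descent_pos hs hr h1 hcrit)
      (mul_nonneg h0 (sub_nonneg.2 hx1))

lemma WExt_pos_of_apply_zero_eq_zero (h0 : 0 ≤ lam) (h1 : lam < 1) (hx : x ≠ 0)
    (hx0 : x 0 = 0) : 0 < WExt d lam x := by
  have hlog : (1 - lam) * log ‖x‖ ≤ (1 - lam) * (‖x‖ - 1) :=
    mul_le_mul_of_nonneg_left (log_le_sub_one_of_pos (norm_pos_iff.2 hx)) (sub_nonneg.2 h1.le)
  have hx1 : lam * x 1 ≤ lam * ‖x‖ := mul_le_mul_of_nonneg_left (apply_le_norm x 1) h0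
  have hlam : 0 < (1 - lam) ^ 2 := pow_pos (sub_pos.2 h1) 2
  simp only [WExt, hx0, zero_div, sub_self, mul_zero, ne_eq, OfNat.ofNat_ne_zero, not_false_eq_true,
    zero_pow]
  linarith

/-- The closed slab `0 ≤ x₁ ≤ 1` without the origin. On it the sublevel sets of `WExt` are compact,
which fails for `W` on `Delta`. -/
def slab (d : ℕ) : Set (Euc d) := {x | x 0 ∈ Icc 0 1} \ {0}

lemma Delta_subset_slab : Delta d ⊆ slab d :=
  fun _ hx => ⟨⟨hx.1.le, hx.2⟩, ne_zero_of_mem_Delta hx⟩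

lemma slab_subset_closure_Delta : slab d ⊆ closure (Delta d) := by
  have hpreimage : Delta d = (fun x : Euc d => x 0) ⁻¹' Ioc 0 1 := rfl
  have hopen : IsOpenMap fun x : Euc d => x 0 := PiLp.isOpenMap_apply 2 _ 0
  rw [hpreimage, ← hopen.preimage_closure_eq_closure_preimage (by fun_prop),
    closure_Ioc zero_ne_one]
  exact sdiff_subset

lemma continuousOn_WExt : ContinuousOn (WExt d lam) {0}ᶜ := by
  have hnorm (x : Euc d) (hx : x ∈ ({0}ᶜ : Set (Euc d))) : ‖x‖ ≠ 0 := norm_ne_zero_iff.2 hx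
  have := continuous_sqrtSubLog
  unfold WExt
  fun_prop (disch := exact hnorm)

lemma WExt_pos (h0 : 0 ≤ lam) (h1 : lam < 1) (hx : x ∈ slab d) (hne : x ≠ xStar d lam) :
    0 < WExt d lam x := by
  rcases hx.1.1.eq_or_lt with hx0 | hx0
  · exact WExt_pos_of_apply_zero_eq_zero h0 h1 hx.2 hx0.symm
  · exact WExt_pos_of_mem_Delta h0 h1 ⟨hx0, hx.1.2⟩ hne

lemma WExt_nonneg (h0 : 0 ≤ lam) (h1 : lam < 1) (hx : x ∈ slab d) : 0 ≤ WExt d lam x := by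
  rcases eq_or_ne x (xStar d lam) with rfl | hne
  · exact (WExt_xStar (pow_le_one₀ h0 h1.le)).ge
  · exact (WExt_pos h0 h1 hx hne).le

lemma le_WExt (h0 : 0 ≤ lam) (h1 : lam ≤ 1) (hx : x ∈ slab d) :
    (1 - lam) * (‖x‖ - log ‖x‖) - 5 / 2 ≤ WExt d lam x := by
  have hx1 : lam * x 1 ≤ lam * ‖x‖ := mul_le_mul_of_nonneg_left (apply_le_norm x 1) h0
  have hquot : x 0 ^ 2 / ‖x‖ ≤ 1 := by
    rw [div_le_one (norm_pos_iff.2 hx.2), sq]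
    simpa using mul_le_mul hx.1.2 (apply_le_norm x 0) hx.1.1 zero_le_one
  have hsqrtSubLog : -1 ≤ lam * (sqrtSubLog (x 0) - sqrtSubLog (x 0 / ‖x‖)) := by
    have := (sqrtSubLog_mem_Icc (x 0)).1
    have := (sqrtSubLog_mem_Icc (x 0 / ‖x‖)).2
    nlinarith
  rw [WExt]
  linarith [sq_nonneg (x 0), sq_nonneg lam]

lemma isCompact_slab_inter_norm_mem_Icc {a : ℝ} (ha : 0 < a) (b : ℝ) :
    IsCompact {x ∈ slab d | ‖x‖ ∈ Icc a b} := by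
  have heq : {x ∈ slab d | ‖x‖ ∈ Icc a b} =
      closedBall 0 b ∩ ((fun x => x 0) ⁻¹' Icc 0 1 ∩ norm ⁻¹' Ici a) := by
    ext x
    have hne : a ≤ ‖x‖ → x ≠ 0 := fun h => norm_pos_iff.1 (ha.trans_le h)
    simp only [slab, mem_ofPred_eq, Set.mem_sdiff, mem_singleton_iff, mem_inter_iff, mem_preimage,
      mem_closedBall_zero_iff, mem_Icc, mem_Ici]
    tauto
  rw [heq]
  exact (isCompact_closedBall 0 b).inter_right
    ((isClosed_Icc.preimage (by fun_prop)).inter (isClosed_Ici.preimage continuous_norm))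

lemma isCompact_WExt_le (h0 : 0 ≤ lam) (h1 : lam < 1) (b : ℝ) :
    IsCompact {x ∈ slab d | WExt d lam x ≤ b} := by
  set B := (b + 5 / 2) / (1 - lam)
  set K : Set (Euc d) := {x ∈ slab d | ‖x‖ ∈ Icc (exp (-B)) (2 * B)}
  have hK : IsCompact K := isCompact_slab_inter_norm_mem_Icc (exp_pos _) _
  have hclosed : IsClosed (K ∩ WExt d lam ⁻¹' Iic b) :=
    (continuousOn_WExt.mono fun _ hx => hx.1.2).preimage_isClosed_of_isClosed hK.isClosed
      isClosed_Iic
  have hbound : ∀ x ∈ slab d, WExt d lam x ≤ b → x ∈ K := fun x hx hWx => by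
    refine ⟨hx, mem_Icc_of_sub_log_le (norm_pos_iff.2 hx.2) ?_⟩
    rw [le_div_iff₀' (sub_pos.2 h1)]
    linarith [le_WExt h0 h1.le hx]
  have heq : {x ∈ slab d | WExt d lam x ≤ b} = K ∩ WExt d lam ⁻¹' Iic b :=
    Subset.antisymm (fun x hx => ⟨hbound x hx.1 hx.2, hx.2⟩) fun x hx => ⟨hx.1.1, hx.2⟩
  rw [heq]
  exact hK.of_isClosed_subset hclosed inter_subset_left

lemma exists_direction_norm_lt (a : Euc d) :
    ∃ v : Euc d, v 0 = 0 ∧ ∀ η : ℝ, 0 < η → ‖a‖ < ‖a + η • v‖ := by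
  have he : e d 1 ≠ 0 := norm_pos_iff.1 (by simp [norm_e])
  rcases le_total 0 (a 1) with ha | ha
  · exact ⟨e d 1, by simp [e], fun η => norm_lt_norm_add_smul (by rwa [inner_e]) he⟩
  · exact ⟨-e d 1, by simp [e], fun η =>
      norm_lt_norm_add_smul (by simpa [inner_neg_right, inner_e] using ha) (neg_ne_zero.2 he)⟩

lemma add_smul_apply_zero {v : Euc d} (hv : v 0 = 0) (x : Euc d) (η : ℝ) :
    (x + η • v) 0 = x 0 := by
  simp [hv]

lemma not_isLocalMaxOn_norm_sub (p : Euc d) (hx : x ∈ slab d) :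
    ¬IsLocalMaxOn (fun y => ‖y - p‖) (slab d) x := by
  obtain ⟨v, hv0, hv⟩ := exists_direction_norm_lt (x - p)
  refine not_isLocalMaxOn_of_lt_add_smul (v := v) ?_ fun η hη => ?_
  · have hpath : Tendsto (fun η : ℝ => x + η • v) (𝓝[>] 0) (𝓝 x) :=
      (Continuous.tendsto' (by fun_prop) 0 x (by simp)).mono_left nhdsWithin_le_nhds
    filter_upwards [hpath.eventually_ne hx.2] with η hne
    exact ⟨by simpa [add_smul_apply_zero hv0] using hx.1, hne⟩
  · rw [add_sub_right_comm]
    exact hv η hη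

lemma not_isLocalMaxOn_U (hx : x ∈ Delta d) : ¬IsLocalMaxOn (U d lam) (Delta d) x := by
  obtain ⟨v, hv0, hv⟩ := exists_direction_norm_lt (x - lam • e d 1)
  refine not_isLocalMaxOn_of_lt_add_smul (v := v) (.of_forall fun η => ?_) fun η hη => ?_
  · simpa [Delta, add_smul_apply_zero hv0] using hx
  · have hnorm := pow_lt_pow_left₀ (hv η hη) (norm_nonneg _) two_ne_zero
    rw [← add_sub_right_comm] at hnorm
    simp only [U, F_eq, add_smul_apply_zero hv0]
    linarith


lemma sub_xStar_superlevel_nonempty (hlam : lam ^ 2 < 1) (t : ℝ) :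
    {x ∈ Delta d | t ≤ ‖x - xStar d lam‖}.Nonempty := by
  refine ⟨xStar d lam + t • e d 1, ?_, ?_⟩
  · simpa [Delta, e] using xStar_mem_Delta (d := d) hlam
  · simpa [norm_smul, norm_e] using le_abs_self t

lemma g_eq_superlevelInf_Delta (d : ℕ) (lam : ℝ) :
    g d lam = superlevelInf (Delta d) (WExt d lam) (fun x => ‖x - xStar d lam‖) := by
  ext t
  rw [g, superlevelInf]
  congr 1
  ext w
  constructor
  · rintro ⟨x, hx, ht, rfl⟩
    exact ⟨x, ⟨hx, ht⟩, (W_eq_WExt hx).symm⟩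
  · rintro ⟨x, ⟨hx, ht⟩, rfl⟩
    exact ⟨x, hx, ht, (W_eq_WExt hx).symm⟩

lemma bddBelow_WExt_image_slab (h0 : 0 ≤ lam) (h1 : lam < 1) :
    BddBelow (WExt d lam '' slab d) :=
  ⟨0, forall_mem_image.2 fun _ hx => WExt_nonneg h0 h1 hx⟩

lemma g_eq_superlevelInf_slab (h0 : 0 ≤ lam) (h1 : lam < 1) :
    g d lam = superlevelInf (slab d) (WExt d lam) (fun x => ‖x - xStar d lam‖) := by
  rw [g_eq_superlevelInf_Delta]
  ext t
  exact superlevelInf_eq_of_subset_closure Delta_subset_slab slab_subset_closure_Delta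
    (sub_xStar_superlevel_nonempty (pow_lt_one₀ h0 h1 two_ne_zero) t)
    (bddBelow_WExt_image_slab h0 h1) (continuousOn_WExt.mono fun _ hx => hx.2) (by fun_prop)
    fun _ hx => not_isLocalMaxOn_norm_sub _ hx

lemma slab_superlevel_nonempty (hlam : lam ^ 2 < 1) (t : ℝ) :
    {x ∈ slab d | t ≤ ‖x - xStar d lam‖}.Nonempty :=
  (sub_xStar_superlevel_nonempty hlam t).mono fun _ hx => ⟨Delta_subset_slab hx.1, hx.2⟩

lemma monotone_g (h0 : 0 ≤ lam) (h1 : lam < 1) : Monotone (g d lam) := by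
  rw [g_eq_superlevelInf_slab h0 h1]
  exact monotone_superlevelInf (bddBelow_WExt_image_slab h0 h1)
    (slab_superlevel_nonempty (pow_lt_one₀ h0 h1 two_ne_zero))

lemma continuous_g (h0 : 0 ≤ lam) (h1 : lam < 1) : Continuous (g d lam) := by
  rw [g_eq_superlevelInf_slab h0 h1]
  exact continuous_superlevelInf (slab_superlevel_nonempty (pow_lt_one₀ h0 h1 two_ne_zero))
    (bddBelow_WExt_image_slab h0 h1) (fun _ b _ => isCompact_WExt_le h0 h1 b)
    (continuousOn_WExt.mono fun _ hx => hx.2) (by fun_prop)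
    fun _ hx => not_isLocalMaxOn_norm_sub _ hx

lemma g_zero (h0 : 0 ≤ lam) (h1 : lam < 1) : g d lam 0 = 0 := by
  have hlam : lam ^ 2 < 1 := pow_lt_one₀ h0 h1 two_ne_zero
  rw [g_eq_superlevelInf_slab h0 h1]
  refine le_antisymm ?_ (le_superlevelInf (slab_superlevel_nonempty hlam 0)
    fun x hx _ => WExt_nonneg h0 h1 hx)
  calc superlevelInf (slab d) (WExt d lam) (fun x => ‖x - xStar d lam‖) 0
      ≤ WExt d lam (xStar d lam) := superlevelInf_le (bddBelow_WExt_image_slab h0 h1)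
        (Delta_subset_slab (xStar_mem_Delta hlam)) (norm_nonneg (xStar d lam - xStar d lam))
    _ = 0 := WExt_xStar hlam.le

lemma g_pos (h0 : 0 ≤ lam) (h1 : lam < 1) {t : ℝ} (ht : 0 < t) : 0 < g d lam t := by
  rw [g_eq_superlevelInf_slab h0 h1]
  obtain ⟨x, hx, htx, heq⟩ := exists_eq_superlevelInf (φ := fun x => ‖x - xStar d lam‖)
    (slab_superlevel_nonempty (pow_lt_one₀ h0 h1 two_ne_zero) t) (bddBelow_WExt_image_slab h0 h1)
    (isCompact_WExt_le h0 h1) (continuousOn_WExt.mono fun _ hx => hx.2) (by fun_prop)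
  rw [← heq]
  exact WExt_pos h0 h1 hx (sub_ne_zero.1 (norm_pos_iff.1 (ht.trans_le htx)))

/-- The distance from `xStar` to the superlevel set `{y ∈ Delta | t ≤ U y}`. -/
def superlevelDist (d : ℕ) (lam : ℝ) : ℝ → ℝ :=
  superlevelInf (Delta d) (fun y => ‖y - xStar d lam‖) (U d lam)

lemma bddBelow_norm_sub_image (p : Euc d) (A : Set (Euc d)) :
    BddBelow ((fun y => ‖y - p‖) '' A) :=
  ⟨0, forall_mem_image.2 fun _ _ => norm_nonneg _⟩

lemma continuousOn_U : ContinuousOn (U d lam) (Delta d) := by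
  have hx0 (x : Euc d) (hx : x ∈ Delta d) : x 0 ≠ 0 := hx.1.ne'
  have := continuous_sqrtSubLog
  have hU : U d lam = fun x => ‖x - lam • e d 1‖ ^ 2 / 2 + lam * sqrtSubLog (x 0) -
      (1 - lam) * log (x 0) - F d lam (xStar d lam) := funext fun x => by rw [U, F_eq]
  rw [hU]
  fun_prop (disch := exact hx0)

lemma neg_log_le_F_smul_add (h0 : 0 ≤ lam) (η : ℝ) :
    (1 - lam) * -log η ≤ F d lam (η • e d 0 + lam • e d 1) := by
  have hη : (η • e d 0 + lam • e d 1) 0 = η := by simp [e]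
  have := mul_nonneg h0 (sqrtSubLog_mem_Icc η).1
  rw [F_eq, hη]
  linarith [sq_nonneg ‖η • e d 0 + lam • e d 1 - lam • e d 1‖]

lemma exists_le_U_norm_sub_xStar_le (h0 : 0 ≤ lam) (h1 : lam < 1) (t : ℝ) :
    ∃ y ∈ Delta d, t ≤ U d lam y ∧ ‖y - xStar d lam‖ ≤ √(1 - lam ^ 2) := by
  set M := t + F d lam (xStar d lam)
  set η := min √(1 - lam ^ 2) (exp (-(M / (1 - lam))))
  have hsqrt : √(1 - lam ^ 2) ≤ 1 := sqrt_le_one.2 (sub_le_self _ (sq_nonneg lam))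
  have hη : 0 < η := lt_min (sqrt_pos.2 (sub_pos.2 (pow_lt_one₀ h0 h1 two_ne_zero))) (exp_pos _)
  have hη_sqrt : η ≤ √(1 - lam ^ 2) := min_le_left _ _
  refine ⟨η • e d 0 + lam • e d 1, ?_, ?_, ?_⟩
  · simpa [Delta, e] using ⟨hη, hη_sqrt.trans hsqrt⟩
  · have hlog : log η ≤ -(M / (1 - lam)) := (log_le_iff_le_exp hη).2 (min_le_right _ _)
    have hM : M ≤ (1 - lam) * -log η := (div_le_iff₀' (sub_pos.2 h1)).1 (le_neg_of_le_neg hlog)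
    rw [U]
    linarith [neg_log_le_F_smul_add (d := d) h0 η]
  · rw [xStar, add_sub_add_right_eq_sub, ← sub_smul, norm_smul, norm_e, mul_one, Real.norm_eq_abs,
      abs_sub_comm, abs_of_nonneg (sub_nonneg.2 hη_sqrt)]
    exact sub_le_self _ hη.le

lemma U_superlevel_nonempty (h0 : 0 ≤ lam) (h1 : lam < 1) (t : ℝ) :
    {y ∈ Delta d | t ≤ U d lam y}.Nonempty :=
  let ⟨y, hy, ht, _⟩ := exists_le_U_norm_sub_xStar_le h0 h1 t
  ⟨y, hy, ht⟩

lemma superlevelDist_le_sqrt (h0 : 0 ≤ lam) (h1 : lam < 1) (t : ℝ) :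
    superlevelDist d lam t ≤ √(1 - lam ^ 2) :=
  let ⟨_, hy, ht, hle⟩ := exists_le_U_norm_sub_xStar_le h0 h1 t
  (superlevelInf_le (bddBelow_norm_sub_image _ _) hy ht).trans hle

lemma isCompact_Delta_norm_sub_xStar_le {b : ℝ} (hb : b < √(1 - lam ^ 2)) :
    IsCompact {x ∈ Delta d | ‖x - xStar d lam‖ ≤ b} := by
  have heq : {x ∈ Delta d | ‖x - xStar d lam‖ ≤ b} =
      closedBall (xStar d lam) b ∩ (fun x => x 0) ⁻¹' Iic 1 := by
    refine Subset.antisymm (fun x hx => ⟨mem_closedBall_iff_norm.2 hx.2, hx.1.2⟩) fun x hx => ?_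
    have hxb := mem_closedBall_iff_norm.1 hx.1
    have hcoord := (PiLp.norm_apply_le (x - xStar d lam) 0).trans hxb
    rw [PiLp.sub_apply, xStar_apply_zero, Real.norm_eq_abs, abs_le] at hcoord
    exact ⟨⟨by linarith [hcoord.1], hx.2⟩, hxb⟩
  rw [heq]
  exact (isCompact_closedBall _ _).inter_right (isClosed_Iic.preimage (by fun_prop))

lemma monotone_superlevelDist (h0 : 0 ≤ lam) (h1 : lam < 1) : Monotone (superlevelDist d lam) :=
  monotone_superlevelInf (bddBelow_norm_sub_image _ _) (U_superlevel_nonempty h0 h1)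

lemma continuous_superlevelDist (h0 : 0 ≤ lam) (h1 : lam < 1) :
    Continuous (superlevelDist d lam) :=
  continuous_superlevelInf (U_superlevel_nonempty h0 h1) (bddBelow_norm_sub_image _ _)
    (fun t _ hb => isCompact_Delta_norm_sub_xStar_le
      (hb.trans_le (superlevelDist_le_sqrt h0 h1 t)))
    (by fun_prop) continuousOn_U fun _ hx => not_isLocalMaxOn_U hx

lemma superlevelDist_zero (h0 : 0 ≤ lam) (h1 : lam < 1) : superlevelDist d lam 0 = 0 := by
  refine le_antisymm ?_ (le_superlevelInf (U_superlevel_nonempty h0 h1 0)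
    fun _ _ _ => norm_nonneg _)
  have hU : U d lam (xStar d lam) = 0 := sub_self _
  calc superlevelDist d lam 0 ≤ ‖xStar d lam - xStar d lam‖ :=
        superlevelInf_le (bddBelow_norm_sub_image _ _)
          (xStar_mem_Delta (pow_lt_one₀ h0 h1 two_ne_zero)) hU.ge
    _ = 0 := by rw [sub_self, norm_zero]

lemma superlevelDist_pos (h0 : 0 ≤ lam) (h1 : lam < 1) {t : ℝ} (ht : 0 < t) :
    0 < superlevelDist d lam t := by
  have hU : U d lam (xStar d lam) < t := (sub_self _).trans_lt ht
  have hmem : xStar d lam ∈ Delta d := xStar_mem_Delta (pow_lt_one₀ h0 h1 two_ne_zero)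
  have hnear := (continuousOn_U _ hmem).eventually_lt_const hU
  obtain ⟨ε, hε, hball⟩ := mem_nhdsWithin_iff.1 hnear
  refine hε.trans_le (le_superlevelInf (U_superlevel_nonempty h0 h1 t) fun y hy hty => ?_)
  by_contra! hlt
  exact hty.not_gt (hball ⟨mem_ball_iff_norm.2 hlt, hy⟩)

lemma alp_eq_g_comp (h0 : 0 ≤ lam) (h1 : lam < 1) :
    alp d lam = g d lam ∘ superlevelDist d lam := by
  ext t
  have halp : alp d lam t =
      superlevelInf (Delta d) (g d lam ∘ fun y => ‖y - xStar d lam‖) (U d lam) t := by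
    rw [alp, superlevelInf]
    congr 1
    ext w
    simp only [mem_ofPred_eq, mem_image, Function.comp_apply, and_assoc, eq_comm]
  rw [halp, superlevelInf_comp (monotone_g h0 h1) (continuous_g h0 h1)
    (bddBelow_norm_sub_image _ _) (U_superlevel_nonempty h0 h1 t)]
  rfl

lemma monotone_alp (h0 : 0 ≤ lam) (h1 : lam < 1) : Monotone (alp d lam) := by
  rw [alp_eq_g_comp h0 h1]
  exact (monotone_g h0 h1).comp (monotone_superlevelDist h0 h1)

lemma continuous_alp (h0 : 0 ≤ lam) (h1 : lam < 1) : Continuous (alp d lam) := by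
  rw [alp_eq_g_comp h0 h1]
  exact (continuous_g h0 h1).comp (continuous_superlevelDist h0 h1)

lemma alp_zero (h0 : 0 ≤ lam) (h1 : lam < 1) : alp d lam 0 = 0 := by
  rw [alp_eq_g_comp h0 h1, Function.comp_apply, superlevelDist_zero h0 h1, g_zero h0 h1]

lemma alp_pos (h0 : 0 ≤ lam) (h1 : lam < 1) {t : ℝ} (ht : 0 < t) : 0 < alp d lam t := by
  rw [alp_eq_g_comp h0 h1]
  exact g_pos h0 h1 (superlevelDist_pos h0 h1 ht)

end Geometry

/-- For `λ ∈ [0,1)`, the function `α : [0,∞) → [0,∞)` is non-decreasing,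
non-negative, continuous, and positive definite: `α(t) = 0` iff `t = 0`. -/
theorem stmt9 (d : ℕ) (lam : ℝ) (h0 : 0 ≤ lam) (h1 : lam < 1) :
    (∀ s t : ℝ, 0 ≤ s → s ≤ t → alp d lam s ≤ alp d lam t) ∧
    (∀ t : ℝ, 0 ≤ t → 0 ≤ alp d lam t) ∧
    ContinuousOn (alp d lam) (Ici 0) ∧
    (∀ t : ℝ, 0 ≤ t → (alp d lam t = 0 ↔ t = 0)) := by
  refine ⟨fun s t _ hst => monotone_alp h0 h1 hst, fun t ht => ?_,
    (continuous_alp h0 h1).continuousOn, fun t ht => ⟨fun hzero => ?_, ?_⟩⟩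
  · exact (alp_zero h0 h1).ge.trans (monotone_alp h0 h1 ht)
  · by_contra hne
    exact (alp_pos h0 h1 (ht.lt_of_ne' hne)).ne' hzero
  · rintro rfl
    exact alp_zero h0 h1
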